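/- Let r > 0 and let (ξ_k)_{k ∈ ℕ} ⊆ P⊥ satisfy inf{‖ξ_k + η‖ : η ∈ C⊥} ≤ r for every k. Then there exist a subsequence (ξ_{k_j})_{j ∈ ℕ} and ξ ∈ P⊥ with inf{‖ξ + η‖ : η ∈ C⊥} ≤ r such that sup{∫_{S²} g d(ξ_{k_j} − ξ) : g ∈ C} → 0 as j → ∞. -/

import Mathlib

open MeasureTheory Metric Filter
open scoped RealInnerProductSpace

noncomputable section

/-- The support function of a set `K ⊆ ℝ³`. -/
def suppFn (K : Set (EuclideanSpace ℝ (Fin 3))) (u : EuclideanSpace ℝ (Fin 3)) : ℝ :=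
  sSup ((fun x => ⟪x, u⟫) '' K)

/-- A body of constant width one in `ℝ³`. -/
def IsBodyOfConstantWidthOne (K : Set (EuclideanSpace ℝ (Fin 3))) : Prop :=
  K.Nonempty ∧ IsCompact K ∧ Convex ℝ K ∧
    ∀ u : EuclideanSpace ℝ (Fin 3), suppFn K u + suppFn K (-u) = ‖u‖

/-- The unit sphere `S²` in `ℝ³`, as a type. -/
abbrev Sph : Type := Metric.sphere (0 : EuclideanSpace ℝ (Fin 3)) 1

/-- The integral of a function against a finite signed Borel measure on `S²`. -/
def sint (ξ : SignedMeasure Sph) (g : Sph → ℝ) : ℝ :=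
  (∫ u, g u ∂ξ.toJordanDecomposition.posPart) - ∫ u, g u ∂ξ.toJordanDecomposition.negPart

/-- The total variation norm of a finite signed Borel measure on `S²`. -/
def tvNorm (ξ : SignedMeasure Sph) : ℝ := (ξ.totalVariation Set.univ).toReal

/-- `C`: continuous functions `g` on `S²` such that `g + 1/2` is the sphere restriction of the
support function of a body of constant width one. -/
def Cw : Set (Sph → ℝ) :=
  {g | Continuous g ∧ ∃ K : Set (EuclideanSpace ℝ (Fin 3)), IsBodyOfConstantWidthOne K ∧
    ∀ u : Sph, g u + 1 / 2 = suppFn K u}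

/-- `P⊥`: signed measures annihilating the restrictions of linear functions. -/
def Pperp : Set (SignedMeasure Sph) :=
  {ξ | ∀ a : EuclideanSpace ℝ (Fin 3), sint ξ (fun u => ⟪a, (u : EuclideanSpace ℝ (Fin 3))⟫) = 0}

/-- `C⊥`: signed measures annihilating every element of `C`. -/
def Cperp : Set (SignedMeasure Sph) :=
  {η | ∀ g ∈ Cw, sint η g = 0}

open scoped Topology BoundedContinuousFunction

/-- The bounded continuous functions with values in `[-1, 1]` that are `1`-Lipschitz. -/
def lipschitzUnitBall (X : Type*) [PseudoMetricSpace X] : Set (X →ᵇ ℝ) :=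
  {f | (∀ x, f x ∈ Set.Icc (-1 : ℝ) 1) ∧ LipschitzWith 1 f}

lemma totallyBounded_lipschitzUnitBall (X : Type*) [PseudoMetricSpace X] [CompactSpace X] :
    TotallyBounded (lipschitzUnitBall X) := by
  have h : IsCompact (closure (lipschitzUnitBall X)) := by
    refine BoundedContinuousFunction.arzela_ascoli (Set.Icc (-1 : ℝ) 1) isCompact_Icc _
      (fun f x hf => hf.1 x) ?_
    exact (LipschitzWith.uniformEquicontinuous _ 1 fun f => f.2.2).equicontinuous
  exact h.totallyBounded.subset subset_closure

/-- Weak convergence of finite measures on a compact space is uniform on `1`-Lipschitz functions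
with values in `[-1, 1]`. -/
lemma eventually_nhds_forall_lipschitz_integral_sub_lt {X : Type*} [PseudoMetricSpace X]
    [CompactSpace X] [MeasurableSpace X] [BorelSpace X] (μ : FiniteMeasure X) {ε : ℝ}
    (hε : 0 < ε) :
    ∀ᶠ ν : FiniteMeasure X in 𝓝 μ, ∀ f ∈ lipschitzUnitBall X,
      |∫ x, f x ∂(ν : Measure X) - ∫ x, f x ∂(μ : Measure X)| < ε := by
  set M : ℝ := (μ : Measure X).real Set.univ + 1 with hM
  have hM0 : 0 < M := by positivity
  set δ : ℝ := ε / (4 * M) with hδ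
  have hδ0 : 0 < δ := by positivity
  obtain ⟨t, ht, hcov⟩ :=
    Metric.totallyBounded_iff.1 (totallyBounded_lipschitzUnitBall X) δ hδ0
  have htend := FiniteMeasure.tendsto_iff_forall_integral_tendsto.1
    (tendsto_id (x := 𝓝 μ))
  have hnet : ∀ᶠ ν : FiniteMeasure X in 𝓝 μ, ∀ f ∈ t,
      |∫ x, f x ∂(ν : Measure X) - ∫ x, f x ∂(μ : Measure X)| < ε / 2 := by
    refine (Filter.eventually_all_finite ht).2 fun f _ => ?_
    exact (Metric.tendsto_nhds.1 (htend f)) (ε / 2) (by positivity)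
  have hmass : ∀ᶠ ν : FiniteMeasure X in 𝓝 μ, (ν : Measure X).real Set.univ < M := by
    have h1 := htend (BoundedContinuousFunction.const X 1)
    simp only [BoundedContinuousFunction.const_apply, integral_const, smul_eq_mul, mul_one] at h1
    exact h1.eventually_lt_const (by simp [hM])
  filter_upwards [hnet, hmass] with ν hν hνM f hf
  obtain ⟨g, hg, hfg⟩ := Set.mem_iUnion₂.1 (hcov hf)
  have hclose : ∀ κ : FiniteMeasure X, (κ : Measure X).real Set.univ ≤ M →
      |∫ x, f x ∂(κ : Measure X) - ∫ x, g x ∂(κ : Measure X)| ≤ ε / 4 := by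
    intro κ hκ
    rw [← integral_sub (f.integrable _) (g.integrable _), ← Real.norm_eq_abs]
    refine (norm_integral_le_of_norm_le_const (C := δ) (ae_of_all _ fun x => ?_)).trans ?_
    · rw [← dist_eq_norm]
      exact (BoundedContinuousFunction.dist_coe_le_dist x).trans (Metric.mem_ball.1 hfg).le
    · calc δ * (κ : Measure X).real Set.univ ≤ δ * M := by gcongr
        _ = ε / 4 := by rw [hδ]; field_simp
  have h1 := abs_le.1 (hclose ν hνM.le)
  have h2 := abs_le.1 (hclose μ (by simp [hM]))
  have h3 := abs_lt.1 (hν g hg)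
  rw [abs_lt]
  constructor <;> linarith [h1.1, h1.2, h2.1, h2.2, h3.1, h3.2]

lemma sint_toSignedMeasure_sub (μ ν : Measure Sph) [IsFiniteMeasure μ] [IsFiniteMeasure ν]
    {g : Sph → ℝ} (hg : Continuous g) :
    sint (μ.toSignedMeasure - ν.toSignedMeasure) g = ∫ u, g u ∂μ - ∫ u, g u ∂ν := by
  have hint : ∀ κ : Measure Sph, IsFiniteMeasure κ → Integrable g κ := fun κ _ =>
    (BoundedContinuousFunction.mkOfCompact ⟨g, hg⟩).integrable κ
  set j := (μ.toSignedMeasure - ν.toSignedMeasure).toJordanDecomposition with hj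
  have h := (μ.toSignedMeasure - ν.toSignedMeasure).toSignedMeasure_toJordanDecomposition
  rw [← hj, JordanDecomposition.toSignedMeasure, sub_eq_sub_iff_add_eq_add,
    ← Measure.toSignedMeasure_add, ← Measure.toSignedMeasure_add,
    Measure.toSignedMeasure_eq_toSignedMeasure_iff] at h
  have h' := congrArg (fun κ : Measure Sph => ∫ u, g u ∂κ) h
  rw [integral_add_measure (hint _ inferInstance) (hint _ inferInstance),
    integral_add_measure (hint _ inferInstance) (hint _ inferInstance)] at h'
  rw [sint, ← hj]
  linarith

lemma sint_add_measure (ξ η : SignedMeasure Sph) {g : Sph → ℝ} (hg : Continuous g) :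
    sint (ξ + η) g = sint ξ g + sint η g := by
  have hint : ∀ κ : Measure Sph, IsFiniteMeasure κ → Integrable g κ := fun κ _ =>
    (BoundedContinuousFunction.mkOfCompact ⟨g, hg⟩).integrable κ
  have h : ξ + η =
      (ξ.toJordanDecomposition.posPart + η.toJordanDecomposition.posPart).toSignedMeasure -
        (ξ.toJordanDecomposition.negPart + η.toJordanDecomposition.negPart).toSignedMeasure := by
    conv_lhs => rw [← ξ.toSignedMeasure_toJordanDecomposition,
      ← η.toSignedMeasure_toJordanDecomposition]
    rw [Measure.toSignedMeasure_add, Measure.toSignedMeasure_add,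
      JordanDecomposition.toSignedMeasure, JordanDecomposition.toSignedMeasure]
    abel
  rw [h, sint_toSignedMeasure_sub _ _ hg,
    integral_add_measure (hint _ inferInstance) (hint _ inferInstance),
    integral_add_measure (hint _ inferInstance) (hint _ inferInstance), sint, sint]
  ring

lemma sint_sub_measure (ξ η : SignedMeasure Sph) {g : Sph → ℝ} (hg : Continuous g) :
    sint (ξ - η) g = sint ξ g - sint η g := by
  have h := sint_add_measure (ξ - η) η hg
  rw [sub_add_cancel] at h
  linarith

lemma sint_add (ξ : SignedMeasure Sph) {f g : Sph → ℝ} (hf : Continuous f) (hg : Continuous g) :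
    sint ξ (fun u => f u + g u) = sint ξ f + sint ξ g := by
  have hint : ∀ h : Sph → ℝ, Continuous h → ∀ κ : Measure Sph, IsFiniteMeasure κ →
      Integrable h κ := fun h hh κ _ =>
    (BoundedContinuousFunction.mkOfCompact ⟨h, hh⟩).integrable κ
  rw [sint, sint, sint, integral_add (hint f hf _ inferInstance) (hint g hg _ inferInstance),
    integral_add (hint f hf _ inferInstance) (hint g hg _ inferInstance)]
  ring

lemma sint_const_mul (ξ : SignedMeasure Sph) (c : ℝ) (f : Sph → ℝ) :
    sint ξ (fun u => c * f u) = c * sint ξ f := by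
  rw [sint, sint, integral_const_mul, integral_const_mul, mul_sub]

lemma tvNorm_eq_add (ξ : SignedMeasure Sph) :
    tvNorm ξ = ξ.toJordanDecomposition.posPart.real Set.univ +
      ξ.toJordanDecomposition.negPart.real Set.univ := by
  rw [tvNorm, SignedMeasure.totalVariation, Measure.add_apply,
    ENNReal.toReal_add (measure_ne_top _ _) (measure_ne_top _ _)]
  rfl

lemma tvNorm_nonneg (ξ : SignedMeasure Sph) : 0 ≤ tvNorm ξ := ENNReal.toReal_nonneg

lemma tvNorm_toSignedMeasure_sub_le (μ ν : Measure Sph) [IsFiniteMeasure μ] [IsFiniteMeasure ν] :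
    tvNorm (μ.toSignedMeasure - ν.toSignedMeasure) ≤ μ.real Set.univ + ν.real Set.univ := by
  rw [tvNorm_eq_add, Measure.toJordanDecomposition_toSignedMeasure_sub,
    Measure.jordanDecompositionOfToSignedMeasureSub_posPart,
    Measure.jordanDecompositionOfToSignedMeasureSub_negPart]
  gcongr
  · exact ENNReal.toReal_mono (measure_ne_top _ _) (Measure.sub_le _)
  · exact ENNReal.toReal_mono (measure_ne_top _ _) (Measure.sub_le _)

lemma zero_mem_Cperp : (0 : SignedMeasure Sph) ∈ Cperp := fun g _ => by
  rw [sint, SignedMeasure.toJordanDecomposition_zero]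
  simp

lemma bddBelow_tvNorm_image (ξ : SignedMeasure Sph) :
    BddBelow ((fun η => tvNorm (ξ + η)) '' Cperp) :=
  ⟨0, by rintro _ ⟨η, -, rfl⟩; exact tvNorm_nonneg _⟩

lemma suppFn_closedBall (a u : EuclideanSpace ℝ (Fin 3)) {ρ : ℝ} (hρ : 0 ≤ ρ) :
    suppFn (closedBall a ρ) u = ⟪a, u⟫ + ρ * ‖u‖ := by
  refine IsGreatest.csSup_eq ⟨⟨a + (ρ / ‖u‖) • u, ?_, ?_⟩, ?_⟩
  · rw [mem_closedBall, dist_eq_norm, add_sub_cancel_left, norm_smul, Real.norm_eq_abs,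
      abs_of_nonneg (by positivity)]
    rw [div_mul_eq_mul_div, mul_div_assoc]
    exact mul_le_of_le_one_right hρ (div_self_le_one _)
  · simp only [inner_add_left, inner_smul_left, real_inner_self_eq_norm_sq, conj_trivial]
    by_cases hu : ‖u‖ = 0
    · simp [hu]
    · field_simp
  · rintro _ ⟨x, hx, rfl⟩
    have h : ⟪x - a, u⟫ ≤ ρ * ‖u‖ := (real_inner_le_norm _ _).trans (by
      gcongr; rwa [← dist_eq_norm])
    rw [inner_sub_left] at h
    simp only
    linarith

lemma inner_mem_Cw (a : EuclideanSpace ℝ (Fin 3)) :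
    (fun u : Sph => ⟪a, (u : EuclideanSpace ℝ (Fin 3))⟫) ∈ Cw := by
  refine ⟨by fun_prop, closedBall a (1 / 2), ⟨⟨a, by simp⟩, isCompact_closedBall _ _,
    convex_closedBall _ _, fun u => ?_⟩, fun u => ?_⟩
  · rw [suppFn_closedBall _ _ (by norm_num), suppFn_closedBall _ _ (by norm_num), inner_neg_right,
      norm_neg]
    ring
  · rw [suppFn_closedBall _ _ (by norm_num), norm_eq_of_mem_sphere]
    ring

lemma Cperp_subset_Pperp : Cperp ⊆ Pperp := fun _ hη a => hη _ (inner_mem_Cw a)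

/-- Every element of `C` is, up to a linear function, `1`-Lipschitz with values in `[-1, 1]`. -/
lemma exists_eq_add_inner_of_mem_Cw {g : Sph → ℝ} (hg : g ∈ Cw) :
    ∃ f ∈ lipschitzUnitBall Sph, ∃ a : EuclideanSpace ℝ (Fin 3),
      g = fun u => f u + ⟪a, (u : EuclideanSpace ℝ (Fin 3))⟫ := by
  obtain ⟨hgc, K, ⟨⟨a, ha⟩, hK, -, hw⟩, hgK⟩ := hg
  have hbdd : ∀ u : EuclideanSpace ℝ (Fin 3), BddAbove ((fun x => ⟪x, u⟫) '' K) := fun u =>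
    (hK.image (by fun_prop)).bddAbove
  have hle : ∀ u : EuclideanSpace ℝ (Fin 3), ∀ x ∈ K, ⟪x, u⟫ ≤ suppFn K u := fun u x hx =>
    le_csSup (hbdd u) ⟨x, hx, rfl⟩
  have hdiam : ∀ x ∈ K, ‖x - a‖ ≤ 1 := by
    intro x hx
    have h1 := hle (x - a) x hx
    have h2 := hle (-(x - a)) a ha
    have h3 := hw (x - a)
    have h4 : ⟪x, x - a⟫ - ⟪a, x - a⟫ = ‖x - a‖ ^ 2 := by
      rw [← inner_sub_left, real_inner_self_eq_norm_sq]
    rw [inner_neg_right] at h2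
    by_contra! hlt
    nlinarith
  have hlip : ∀ u v : EuclideanSpace ℝ (Fin 3),
      suppFn K u - ⟪a, u⟫ ≤ suppFn K v - ⟪a, v⟫ + ‖u - v‖ := by
    intro u v
    suffices suppFn K u ≤ ⟪a, u⟫ + (suppFn K v - ⟪a, v⟫ + ‖u - v‖) by linarith
    refine csSup_le (Set.Nonempty.image _ ⟨a, ha⟩) ?_
    rintro _ ⟨x, hx, rfl⟩
    have h1 := hle v x hx
    have h2 : ⟪x - a, u - v⟫ ≤ ‖u - v‖ := (real_inner_le_norm _ _).trans
      (mul_le_of_le_one_left (norm_nonneg _) (hdiam x hx))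
    simp only [inner_sub_left, inner_sub_right] at h2 ⊢
    linarith
  have hfc : Continuous fun u : Sph => g u - ⟪a, (u : EuclideanSpace ℝ (Fin 3))⟫ := by fun_prop
  refine ⟨BoundedContinuousFunction.mkOfCompact ⟨_, hfc⟩, ⟨fun u => ?_, ?_⟩, a, ?_⟩
  · have h1 := hle u a ha
    have h2 := hle (-u) a ha
    have h3 := hw u
    rw [norm_eq_of_mem_sphere] at h3
    rw [inner_neg_right] at h2
    have h4 := hgK u
    simp only [BoundedContinuousFunction.mkOfCompact_apply, ContinuousMap.coe_mk, Set.mem_Icc]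
    constructor <;> linarith
  · refine LipschitzWith.of_le_add fun u v => ?_
    have h := hlip u v
    rw [← hgK, ← hgK] at h
    simp only [BoundedContinuousFunction.mkOfCompact_apply, ContinuousMap.coe_mk]
    rw [Subtype.dist_eq, dist_eq_norm]
    linarith
  · ext u
    simp

lemma inner_mem_lipschitzUnitBall {a : EuclideanSpace ℝ (Fin 3)} (ha : ‖a‖ ≤ 1) :
    ∃ f ∈ lipschitzUnitBall Sph, ∀ u : Sph, f u = ⟪a, (u : EuclideanSpace ℝ (Fin 3))⟫ := by
  refine ⟨BoundedContinuousFunction.mkOfCompact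
    ⟨fun u : Sph => ⟪a, (u : EuclideanSpace ℝ (Fin 3))⟫, by fun_prop⟩, ⟨fun u => ?_, ?_⟩,
    fun u => rfl⟩
  · have h := abs_real_inner_le_norm a (u : EuclideanSpace ℝ (Fin 3))
    rw [norm_eq_of_mem_sphere, mul_one] at h
    exact abs_le.1 (h.trans ha)
  · refine LipschitzWith.of_le_add fun u v => ?_
    have h := (real_inner_le_norm a ((u : EuclideanSpace ℝ (Fin 3)) - v)).trans
      (mul_le_of_le_one_left (norm_nonneg _) ha)
    rw [inner_sub_right] at h
    simp only [BoundedContinuousFunction.mkOfCompact_apply, ContinuousMap.coe_mk]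
    rw [Subtype.dist_eq, dist_eq_norm]
    linarith

/-- A signed measure vanishes on linear functions if it is approximated by such measures uniformly
on `1`-Lipschitz functions with values in `[-1, 1]`. -/
lemma mem_Pperp_of_forall_approx {ξ : SignedMeasure Sph}
    (h : ∀ ε > 0, ∃ ζ ∈ Pperp, ∀ f ∈ lipschitzUnitBall Sph, |sint ζ f - sint ξ f| ≤ ε) :
    ξ ∈ Pperp := by
  intro a
  have hc : 0 < ‖a‖ + 1 := by positivity
  obtain ⟨f, hf, hfa⟩ := inner_mem_lipschitzUnitBall (a := (‖a‖ + 1)⁻¹ • a) (by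
    rw [norm_smul, Real.norm_eq_abs, abs_of_nonneg (by positivity), inv_mul_le_one₀ hc]
    linarith)
  have hzero : sint ξ f = 0 := by
    refine abs_eq_zero.1 (le_antisymm (le_of_forall_pos_le_add fun ε hε => ?_) (abs_nonneg _))
    obtain ⟨ζ, hζ, hζf⟩ := h ε hε
    have h1 := hζf f hf
    rw [show sint ζ f = 0 by rw [funext hfa]; exact hζ _, zero_sub, abs_neg] at h1
    simpa using h1
  have heq : (fun u : Sph => ⟪a, (u : EuclideanSpace ℝ (Fin 3))⟫) =
      fun u => (‖a‖ + 1) * f u := by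
    ext u
    rw [hfa, inner_smul_left, conj_trivial, mul_inv_cancel_left₀ hc.ne']
  rw [heq, sint_const_mul, hzero, mul_zero]

/-- A sequence of signed measures of bounded total variation has a subsequence converging uniformly
on `1`-Lipschitz functions with values in `[-1, 1]`, and the total variation norm is lower
semicontinuous along it. -/
lemma exists_subseq_lipschitz_approx (ζ : ℕ → SignedMeasure Sph) {R : ℝ}
    (hR : ∀ k, tvNorm (ζ k) ≤ R) :
    ∃ (k : ℕ → ℕ) (ξ : SignedMeasure Sph), StrictMono k ∧
      ∀ j : ℕ, tvNorm ξ ≤ tvNorm (ζ (k j)) + 2 / (j + 1) ∧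
        ∀ f ∈ lipschitzUnitBall Sph, |sint (ζ (k j)) f - sint ξ f| ≤ 2 / (j + 1) := by
  let P : ℕ → FiniteMeasure Sph := fun k => ⟨(ζ k).toJordanDecomposition.posPart, inferInstance⟩
  let N : ℕ → FiniteMeasure Sph := fun k => ⟨(ζ k).toJordanDecomposition.negPart, inferInstance⟩
  have hmem : ∀ k, (P k, N k) ∈ {μ : FiniteMeasure Sph | μ.mass ≤ R.toNNReal} ×ˢ
      {μ : FiniteMeasure Sph | μ.mass ≤ R.toNNReal} := by
    intro k
    have h := (tvNorm_eq_add (ζ k)).symm.le.trans (hR k)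
    refine ⟨NNReal.le_toNNReal_of_coe_le (le_trans ?_ h),
      NNReal.le_toNNReal_of_coe_le (le_trans ?_ h)⟩
    · exact le_add_of_nonneg_right measureReal_nonneg
    · exact le_add_of_nonneg_left measureReal_nonneg
  have hcomp := isCompact_setOfPred_finiteMeasure_le_of_compactSpace Sph R.toNNReal
  obtain ⟨⟨p, q⟩, -, hpq⟩ := (hcomp.prod hcomp).exists_mapClusterPt
    (f := atTop) (u := fun k => (P k, N k)) (tendsto_principal.2 (Eventually.of_forall hmem))
  have hfreq : ∀ j : ℕ, ∃ᶠ k in atTop, ∀ f ∈ lipschitzUnitBall Sph,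
      |∫ u, f u ∂(P k : Measure Sph) - ∫ u, f u ∂(p : Measure Sph)| < 1 / (j + 1) ∧
      |∫ u, f u ∂(N k : Measure Sph) - ∫ u, f u ∂(q : Measure Sph)| < 1 / (j + 1) := by
    intro j
    have hj : (0 : ℝ) < 1 / (j + 1) := by positivity
    have h := Filter.Eventually.prodMk_nhds
      (eventually_nhds_forall_lipschitz_integral_sub_lt p hj)
      (eventually_nhds_forall_lipschitz_integral_sub_lt q hj)
    exact (hpq.frequently h).mono fun k hk f hf => ⟨hk.1 f hf, hk.2 f hf⟩
  obtain ⟨k, hk, hkj⟩ := extraction_forall_of_frequently hfreq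
  refine ⟨k, (p : Measure Sph).toSignedMeasure - (q : Measure Sph).toSignedMeasure, hk,
    fun j => ⟨?_, fun f hf => ?_⟩⟩
  · have hone : BoundedContinuousFunction.const Sph (1 : ℝ) ∈ lipschitzUnitBall Sph :=
      ⟨fun _ => by simp, LipschitzWith.const' 1⟩
    obtain ⟨h1, h2⟩ := hkj j _ hone
    simp only [BoundedContinuousFunction.const_apply, integral_const, smul_eq_mul, mul_one]
      at h1 h2
    have h3 := tvNorm_toSignedMeasure_sub_le (p : Measure Sph) (q : Measure Sph)
    have h4 := tvNorm_eq_add (ζ (k j))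
    have h5 : (2 : ℝ) / (j + 1) = 1 / (j + 1) + 1 / (j + 1) := by ring
    have h1' := (abs_lt.1 h1).1
    have h2' := (abs_lt.1 h2).1
    simp only [P, N, FiniteMeasure.toMeasure_mk] at h1' h2'
    linarith
  · obtain ⟨h1, h2⟩ := hkj j f hf
    rw [sint_toSignedMeasure_sub _ _ f.continuous, sint]
    have h5 : (2 : ℝ) / (j + 1) = 1 / (j + 1) + 1 / (j + 1) := by ring
    rw [abs_lt] at h1 h2
    simp only [P, N, FiniteMeasure.toMeasure_mk] at h1 h2
    rw [abs_le]
    constructor <;> linarith [h1.1, h1.2, h2.1, h2.2]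

theorem compactness_in_chiStar_metric (r : ℝ) (hr : 0 < r)
    (ξ : ℕ → SignedMeasure Sph) (hmem : ∀ k, ξ k ∈ Pperp)
    (hbd : ∀ k, sInf ((fun η => tvNorm (ξ k + η)) '' Cperp) ≤ r) :
    ∃ (k : ℕ → ℕ) (ξ' : SignedMeasure Sph), StrictMono k ∧ ξ' ∈ Pperp ∧
      sInf ((fun η => tvNorm (ξ' + η)) '' Cperp) ≤ r ∧
      Filter.Tendsto (fun j => sSup ((fun g => sint (ξ (k j) - ξ') g) '' Cw))
        Filter.atTop (nhds 0) := by
  have hex : ∀ n : ℕ, ∃ η ∈ Cperp, tvNorm (ξ n + η) < r + 1 / (n + 1) := by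
    intro n
    have hn : (0 : ℝ) < 1 / (n + 1) := by positivity
    obtain ⟨_, ⟨η, hη, rfl⟩, hlt⟩ := exists_lt_of_csInf_lt
      (Set.Nonempty.image _ ⟨0, zero_mem_Cperp⟩) ((hbd n).trans_lt (lt_add_of_pos_right r hn))
    exact ⟨η, hη, hlt⟩
  choose η hη hlt using hex
  have hζP : ∀ n, ξ n + η n ∈ Pperp := fun n a => by
    rw [sint_add_measure _ _ (by fun_prop), hmem n a, Cperp_subset_Pperp (hη n) a, add_zero]
  have hone : ∀ n : ℕ, (1 : ℝ) / (n + 1) ≤ 1 := fun n => by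
    rw [div_le_one (by positivity)]
    linarith [n.cast_nonneg (α := ℝ)]
  obtain ⟨k, ξ', hk, happ⟩ := exists_subseq_lipschitz_approx (fun n => ξ n + η n) (R := r + 1)
    fun n => (hlt n).le.trans (by linarith [hone n])
  have hlim : ∀ c : ℝ, Tendsto (fun j : ℕ => c / ((j : ℝ) + 1)) atTop (𝓝 0) := fun c => by
    simpa [div_eq_mul_inv] using (tendsto_one_div_add_atTop_nhds_zero_nat (𝕜 := ℝ)).const_mul c
  have hξ' : ξ' ∈ Pperp := mem_Pperp_of_forall_approx fun ε hε => by
    obtain ⟨j, hj⟩ := ((hlim 2).eventually_le_const hε).exists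
    exact ⟨_, hζP (k j), fun f hf => ((happ j).2 f hf).trans hj⟩
  refine ⟨k, ξ', hk, hξ', ?_, ?_⟩
  · refine (csInf_le (bddBelow_tvNorm_image ξ') ⟨0, zero_mem_Cperp, rfl⟩).trans ?_
    simp only [add_zero]
    refine ge_of_tendsto' (by simpa using (hlim 3).const_add r) fun j => ?_
    have h1 := (happ j).1
    have h2 := hlt (k j)
    have h3 : (1 : ℝ) / (k j + 1) ≤ 1 / (j + 1) := by
      have : (j : ℝ) ≤ k j := by exact_mod_cast hk.le_apply
      gcongr
    have h4 : (3 : ℝ) / (j + 1) = 1 / (j + 1) + 2 / (j + 1) := by ring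
    linarith
  · have hbound : ∀ j : ℕ, ∀ g ∈ Cw, |sint (ξ (k j) - ξ') g| ≤ 2 / (j + 1) := by
      intro j g hg
      have h1 : sint (ξ (k j) - ξ') g = sint (ξ (k j) + η (k j)) g - sint ξ' g := by
        rw [sint_sub_measure _ _ hg.1, sint_add_measure _ _ hg.1, hη (k j) g hg, add_zero]
      obtain ⟨f, hf, a, rfl⟩ := exists_eq_add_inner_of_mem_Cw hg
      rw [h1, sint_add _ f.continuous (by fun_prop), sint_add _ f.continuous (by fun_prop),
        hζP (k j) a, hξ' a, add_zero, add_zero]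
      exact (happ j).2 f hf
    refine squeeze_zero_norm (fun j => ?_) (hlim 2)
    rw [Real.norm_eq_abs, abs_le]
    constructor
    · refine (abs_le.1 (hbound j _ (inner_mem_Cw 0))).1.trans
        (le_csSup ⟨2 / (j + 1), ?_⟩ ⟨_, inner_mem_Cw 0, rfl⟩)
      rintro _ ⟨g, hg, rfl⟩
      exact (abs_le.1 (hbound j g hg)).2
    · refine Real.sSup_le ?_ (by positivity)
      rintro _ ⟨g, hg, rfl⟩
      exact (abs_le.1 (hbound j g hg)).2
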